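/- Let q be an odd prime power and r ≥ 4 even, and let B be the hypersurface of PG(r,q²) defined below with 4α^{q+1}+(β^q−β)² a non-square in GF(q). Then |B| = q^{2r−1}+(q^{2(r−1)}−q²)/(q²−1)+1, and for every hyperplane Σ of PG(r,q²) the cardinality |B ∩ Σ| belongs to the set {n₁, n₂, n₃, n₄, n₅}, where n₁ = q²(q^{2(r−2)}−1)/(q²−1)+1, n₂ = q^{2r−3}−q^{r−1}+q^{r−2}+(q^{2(r−2)}−1)/(q²−1), n₃ = q^{2r−3}+(q^{2(r−2)}−q²)/(q²−1)−q^{r−2}+1, n₄ = q^{2r−3}+(q^{2(r−2)}−q²)/(q²−1)+1, and n₅ = q^{2r−3}+(q^{2(r−2)}−q²)/(q²−1)+q^{r−2}+1. -/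

import Mathlib

/-- The affine equation
`x_r^q − x_r + α^q(x₁^{2q}+⋯+x_{r−1}^{2q}) − α(x₁²+⋯+x_{r−1}²)
  = (β^q−β)(x₁^{q+1}+⋯+x_{r−1}^{q+1})`. -/
def affEq {F : Type*} [Field F] (q r : ℕ) (α β : F) (x : Fin (r + 1) → F) : Prop :=
  x (Fin.last r) ^ q - x (Fin.last r)
      + α ^ q * (∑ i : Fin (r + 1), if 1 ≤ i.1 ∧ i.1 < r then x i ^ (2 * q) else 0)
      - α * (∑ i : Fin (r + 1), if 1 ≤ i.1 ∧ i.1 < r then x i ^ 2 else 0)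
    = (β ^ q - β) * (∑ i : Fin (r + 1), if 1 ≤ i.1 ∧ i.1 < r then x i ^ (q + 1) else 0)

/-- The hypersurface `B` of `PG(r,q²)`: the affine points (X₀ ≠ 0) whose affine
coordinates satisfy `affEq`, together with the points at infinity (X₀ = 0)
satisfying `X₁² + ⋯ + X_{r−1}² = 0`. -/
noncomputable def Bset (F : Type*) [Field F] (q r : ℕ) (α β : F) :
    Set (Projectivization F (Fin (r + 1) → F)) :=
  {P | (P.rep 0 ≠ 0 ∧ affEq q r α β fun i => P.rep i / P.rep 0) ∨
       (P.rep 0 = 0 ∧ (∑ i : Fin (r + 1), if 1 ≤ i.1 ∧ i.1 < r then P.rep i ^ 2 else 0) = 0)}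

open Classical in
/-- integer-valued count of the elements satisfying `p` -/
noncomputable def cnt {X : Type*} [Fintype X] (p : X → Prop) : ℤ :=
  ∑ x, if p x then 1 else 0

theorem cnt_congr {X : Type*} [Fintype X] {p p' : X → Prop} (h : ∀ x, p x ↔ p' x) :
    cnt p = cnt p' := by
  have : p = p' := by ext x; exact h x
  rw [this]

theorem cnt_card {X : Type*} [Fintype X] (p : X → Prop) : cnt p = (Nat.card {x // p x} : ℤ) := by
  classical
  unfold cnt
  rw [Nat.card_eq_fintype_card, Fintype.card_subtype, Finset.card_filter]
  push_cast
  exact Finset.sum_congr rfl fun x _ => by congr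

theorem cnt_equiv {X Y : Type*} [Fintype X] [Fintype Y] (e : X ≃ Y) (p : Y → Prop) :
    cnt (fun x => p (e x)) = cnt p := by
  classical
  unfold cnt
  exact Fintype.sum_equiv e _ _ fun x => rfl

theorem cnt_prod {X Y : Type*} [Fintype X] [Fintype Y] (p : X × Y → Prop) :
    cnt p = ∑ x, cnt (fun y => p (x, y)) := by
  unfold cnt
  rw [Fintype.sum_prod_type]

theorem cnt_prod' {X Y : Type*} [Fintype X] [Fintype Y] (p : X × Y → Prop) :
    cnt p = ∑ y, cnt (fun x => p (x, y)) := by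
  unfold cnt
  rw [Fintype.sum_prod_type_right]

theorem cnt_true {X : Type*} [Fintype X] : cnt (fun _ : X => True) = (Fintype.card X : ℤ) := by
  simp [cnt]

theorem cnt_false {X : Type*} [Fintype X] : cnt (fun _ : X => False) = 0 := by
  simp [cnt]

theorem cnt_eq {X : Type*} [Fintype X] (a : X) : cnt (fun x : X => x = a) = 1 := by
  classical
  simp [cnt]

theorem cnt_const_and {X : Type*} [Fintype X] (c : Prop) (p : X → Prop) [Decidable c] :
    cnt (fun x => c ∧ p x) = if c then cnt p else 0 := by
  split_ifs with h
  · exact cnt_congr fun x => by simp [h]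
  · rw [← cnt_false (X := X)]; exact cnt_congr fun x => by simp [h]

theorem cnt_split {X : Type*} [Fintype X] (p c : X → Prop) :
    cnt p = cnt (fun x => p x ∧ c x) + cnt (fun x => p x ∧ ¬ c x) := by
  classical
  unfold cnt
  rw [← Finset.sum_add_distrib]
  refine Finset.sum_congr rfl fun x _ => ?_
  by_cases h : p x <;> by_cases h' : c x <;> simp [h, h']

theorem cnt_and_prod {X Y : Type*} [Fintype X] [Fintype Y] (p : X → Prop) (p' : Y → Prop) :
    cnt (fun z : X × Y => p z.1 ∧ p' z.2) = cnt p * cnt p' := by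
  classical
  rw [cnt_prod]
  simp only
  simp_rw [cnt_const_and]
  unfold cnt
  rw [Finset.sum_mul]
  refine Finset.sum_congr rfl fun x _ => ?_
  by_cases h : p x <;> simp [h]

theorem sum_fiber {X Y : Type*} [Fintype X] [Fintype Y] (f : X → Y) :
    ∑ y, cnt (fun x => f x = y) = (Fintype.card X : ℤ) := by
  classical
  unfold cnt
  rw [Finset.sum_comm]
  simp

/-- number of `x` in `X^n` with `∑ h (x i) = d` -/
noncomputable def rep {X A : Type*} [Fintype X] [AddCommGroup A] (h : X → A) (n : ℕ) (d : A) : ℤ :=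
  cnt (fun x : Fin n → X => ∑ i, h (x i) = d)

theorem rep_zero {X A : Type*} [Fintype X] [AddCommGroup A] [DecidableEq A] (h : X → A) (d : A) :
    rep h 0 d = if d = 0 then 1 else 0 := by
  classical
  unfold rep cnt
  simp [eq_comm]

theorem rep_succ {X A : Type*} [Fintype X] [AddCommGroup A] (h : X → A) (n : ℕ) (d : A) :
    rep h (n + 1) d = ∑ x, rep h n (d - h x) := by
  unfold rep
  rw [← cnt_equiv (Fin.consEquiv (fun _ => X)), cnt_prod]
  refine Finset.sum_congr rfl fun x _ => cnt_congr fun y => ?_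
  simp only [Fin.consEquiv_apply, Fin.sum_univ_succ, Fin.cons_zero, Fin.cons_succ]
  rw [eq_sub_iff_add_eq, add_comm]

/-- convolution lemma -/
theorem rep_formula {X A : Type*} [Fintype X] [AddCommGroup A] [DecidableEq A] (V : AddSubgroup A)
    (h : X → A) (hV : ∀ x, h x ∈ V) (g e : ℤ)
    (h1 : ∀ d ∈ V, g * cnt (fun x => h x = d) = Fintype.card X + e * (g * (if d = 0 then 1 else 0) - 1))
    (n : ℕ) : ∀ d ∈ V, g * rep h n d
      = (Fintype.card X : ℤ) ^ n + e ^ n * (g * (if d = 0 then 1 else 0) - 1) := by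
  induction n with
  | zero => intro d _; rw [rep_zero]; ring
  | succ n ih =>
    intro d hd
    rw [rep_succ, Finset.mul_sum, Finset.sum_congr rfl fun x _ => ih (d - h x) (V.sub_mem hd (hV x)),
      Finset.sum_add_distrib, ← Finset.mul_sum, Finset.sum_sub_distrib, ← Finset.mul_sum]
    have : ∑ x, (if d - h x = 0 then (1 : ℤ) else 0) = cnt (fun x => h x = d) := by
      unfold cnt
      refine Finset.sum_congr rfl fun x _ => ?_
      by_cases h' : h x = d
      · simp [h']
      · rw [if_neg h', if_neg (fun h0 => h' (sub_eq_zero.1 h0).symm)]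
    rw [this, h1 d hd]
    simp
    ring

theorem fiber_tight {X Y : Type*} [DecidableEq Y] (s : Finset X) (t : Finset Y)
    (f : X → Y) (hf : ∀ x ∈ s, f x ∈ t) (a b : ℕ) (hs : s.card = a * b) (ht : t.card ≤ a)
    (hb : ∀ y ∈ t, (s.filter (fun x => f x = y)).card ≤ b) :
    ∀ y ∈ t, (s.filter (fun x => f x = y)).card = b := by
  have h1 := Finset.card_eq_sum_card_fiberwise (s := s) (t := t) (f := f) hf
  have h2 : ∑ y ∈ t, (s.filter (fun x => f x = y)).card ≤ ∑ y ∈ t, b := Finset.sum_le_sum hb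
  have h3 : ∑ y ∈ t, b ≤ a * b := by simp; exact Nat.mul_le_mul_right _ ht
  have h4 : ∑ y ∈ t, (s.filter (fun x => f x = y)).card = ∑ y ∈ t, b := by omega
  exact (Finset.sum_eq_sum_iff_of_le hb).1 h4

open Polynomial in
theorem card_le_of_poly {F : Type*} [Field F] (s : Finset F) (p : F[X]) (hp : p ≠ 0) (n : ℕ)
    (hn : p.natDegree ≤ n) (hs : ∀ x ∈ s, p.eval x = 0) : s.card ≤ n := by
  classical
  have : s ⊆ p.roots.toFinset := by
    intro x hx
    rw [Multiset.mem_toFinset, mem_roots hp]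
    exact hs x hx
  exact (Finset.card_le_card this).trans ((Multiset.toFinset_card_le _).trans ((card_roots' p).trans hn))

theorem cnt_filter {X : Type*} [Fintype X] (p : X → Prop) [DecidablePred p] :
    cnt p = ((Finset.univ.filter p).card : ℤ) := by
  classical
  unfold cnt
  rw [Finset.card_filter]
  push_cast
  exact Finset.sum_congr rfl fun x _ => by congr

open Polynomial in
theorem fiber_trace {F : Type*} [Field F] [Fintype F] (q : ℕ) (hq : 2 ≤ q)
    (hF : Fintype.card F = q ^ 2) (φ : F →+* F) (hφ : ∀ x, φ x = x ^ q) (hφ2 : ∀ x, φ (φ x) = x)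
    (v : F) (hv : φ v = -v) : cnt (fun z => φ z - z = v) = q := by
  classical
  have key := fiber_tight (Finset.univ : Finset F) (Finset.univ.filter (fun v : F => φ v = -v))
    (fun z => φ z - z) (by intro x _; simp [hφ2]) q q
    (by rw [Finset.card_univ, hF, sq])
    (by
      have hd : (X ^ q + X : F[X]).natDegree = q := by
        rw [natDegree_add_eq_left_of_natDegree_lt] <;> simp <;> omega
      refine card_le_of_poly _ (X ^ q + X : F[X]) ?_ q hd.le ?_
      · intro h; rw [h] at hd; simp at hd; omega
      · intro x hx
        simp [hφ] at hx
        simp [hx])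
    (by
      intro y _
      have hd : (X ^ q - X - C y : F[X]).natDegree = q := by
        rw [natDegree_sub_C, natDegree_sub_eq_left_of_natDegree_lt] <;> simp <;> omega
      refine card_le_of_poly _ (X ^ q - X - C y : F[X]) ?_ q hd.le ?_
      · intro h; rw [h] at hd; simp at hd; omega
      · intro x hx
        simp [hφ] at hx
        simp [hx]) v (by simpa using hv)
  rw [cnt_filter, key]

open Polynomial in
theorem fiber_norm {F : Type*} [Field F] [Fintype F] (q : ℕ) (hq : 2 ≤ q)
    (hF : Fintype.card F = q ^ 2) (φ : F →+* F) (hφ : ∀ x, φ x = x ^ q) (hφ2 : ∀ x, φ (φ x) = x)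
    (v : F) (hv : φ v = v) (hv0 : v ≠ 0) : cnt (fun z => φ z * z = v) = q + 1 := by
  classical
  have key := fiber_tight (Finset.univ.filter (fun v : F => v ≠ 0))
    (Finset.univ.filter (fun v : F => φ v = v ∧ v ≠ 0))
    (fun z => φ z * z) (by intro x hx; simp at hx; simp [hφ2, hx, mul_comm]) (q - 1) (q + 1)
    (by
      rw [Finset.filter_ne' , Finset.card_erase_of_mem (Finset.mem_univ _), Finset.card_univ, hF]
      obtain ⟨k, rfl⟩ : ∃ k, q = k + 1 := ⟨q - 1, by omega⟩
      simp only [Nat.add_sub_cancel]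
      ring_nf; omega)
    (by
      refine card_le_of_poly _ (X ^ (q - 1) - 1 : F[X]) ?_ (q - 1) ?_ ?_
      · exact (monic_X_pow_sub_C (1 : F) (by omega : q - 1 ≠ 0)).ne_zero
      · exact (natDegree_X_pow_sub_C (R := F) (n := q - 1) (r := 1)).le
      · intro x hx
        simp [hφ] at hx
        obtain ⟨h1, h2⟩ := hx
        have : x ^ (q - 1) * x = 1 * x := by
          rw [← pow_succ, Nat.sub_add_cancel (by omega), h1, one_mul]
        simp [mul_right_cancel₀ h2 this])
    (by
      intro y _
      refine card_le_of_poly _ (X ^ (q + 1) - C y : F[X]) ?_ (q + 1) ?_ ?_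
      · exact (monic_X_pow_sub_C y (by omega : q + 1 ≠ 0)).ne_zero
      · exact (natDegree_X_pow_sub_C (R := F) (n := q + 1) (r := y)).le
      · intro x hx
        simp [hφ] at hx
        simp [pow_succ, hx.2])
     v (by simp [hv, hv0])
  rw [cnt_filter]
  rw [Finset.filter_filter] at key
  rw [← Nat.cast_one, ← Nat.cast_add, ← key]
  congr 2
  ext x
  simp
  rintro h rfl
  simp at h
  exact hv0 h.symm
theorem cnt_mul {F : Type*} [Field F] [Fintype F] [DecidableEq F] (d : F) :
    cnt (fun p : F × F => p.1 * p.2 = d)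
      = (Fintype.card F : ℤ) - 1 + Fintype.card F * (if d = 0 then 1 else 0) := by
  rw [cnt_prod]
  have h : ∀ u : F, cnt (fun v => u * v = d) =
      1 + (if u = 0 then (Fintype.card F : ℤ) * (if d = 0 then 1 else 0) - 1 else 0) := by
    intro u
    by_cases hu : u = 0
    · by_cases hd : d = 0
      · subst hu hd; simp [cnt]
      · subst hu; simp [hd, Ne.symm hd, cnt]
    · rw [if_neg hu, add_zero, ← cnt_eq (u⁻¹ * d)]
      refine cnt_congr fun v => ?_
      rw [eq_inv_mul_iff_mul_eq₀ hu]
  simp only [h]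
  rw [Finset.sum_add_distrib, Finset.sum_ite_eq']
  simp
  ring

theorem cnt_sq2 {F : Type*} [Field F] [Fintype F] [DecidableEq F] (h2 : (2 : F) ≠ 0)
    (j : F) (hj : j * j = -1) (d : F) :
    cnt (fun p : F × F => p.1 ^ 2 + p.2 ^ 2 = d)
      = (Fintype.card F : ℤ) - 1 + Fintype.card F * (if d = 0 then 1 else 0) := by
  rw [← cnt_mul]
  let e : F × F ≃ F × F :=
    { toFun := fun p => (p.1 + j * p.2, p.1 - j * p.2)
      invFun := fun p => ((p.1 + p.2) / 2, -j * (p.1 - p.2) / 2)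
      left_inv := by
        rintro ⟨x, y⟩
        ext
        · simp only; field_simp; ring
        · simp only; field_simp; linear_combination (-2 * y) * hj
      right_inv := by
        rintro ⟨x, y⟩
        ext
        · simp only; field_simp; linear_combination (-(x - y)) * hj
        · simp only; field_simp; linear_combination (x - y) * hj }
  rw [← cnt_equiv e (fun p : F × F => p.1 * p.2 = d)]
  refine cnt_congr fun p => ?_
  show _ ↔ (p.1 + j * p.2) * (p.1 - j * p.2) = d
  have : (p.1 + j * p.2) * (p.1 - j * p.2) = p.1 ^ 2 + p.2 ^ 2 := by
    linear_combination (-p.2 ^ 2) * hj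
  rw [this]

theorem rep_pair {X A : Type*} [Fintype X] [AddCommGroup A] (h : X → A) (k : ℕ) :
    ∀ d : A, rep (fun p : X × X => h p.1 + h p.2) k d = rep h (2 * k) d := by
  induction k with
  | zero =>
    intro d
    classical
    rw [rep_zero, Nat.mul_zero, rep_zero]
  | succ k ih =>
    intro d
    rw [rep_succ, show 2 * (k + 1) = 2 * k + 1 + 1 by ring, rep_succ, Fintype.sum_prod_type]
    refine Finset.sum_congr rfl fun x _ => ?_
    rw [rep_succ]
    refine Finset.sum_congr rfl fun y _ => ?_
    rw [ih, sub_sub]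

theorem rep_sq_even {F : Type*} [Field F] [Fintype F] [DecidableEq F] (h2 : (2 : F) ≠ 0)
    (j : F) (hj : j * j = -1) (k : ℕ) (d : F) :
    (Fintype.card F : ℤ) * rep (fun x : F => x ^ 2) (2 * k) d
      = (Fintype.card F : ℤ) ^ (2 * k)
        + (Fintype.card F : ℤ) ^ k * (Fintype.card F * (if d = 0 then 1 else 0) - 1) := by
  rw [← rep_pair, rep_formula ⊤ _ (fun _ => trivial) (Fintype.card F : ℤ) (Fintype.card F : ℤ) _ k d
    trivial]
  · rw [Fintype.card_prod]; push_cast; ring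
  · intro d _
    rw [cnt_sq2 h2 j hj, Fintype.card_prod]; push_cast; ring

theorem rep_sq_odd {F : Type*} [Field F] [Fintype F] (h2 : (2 : F) ≠ 0)
    (j : F) (hj : j * j = -1) (k : ℕ) (d : F) :
    rep (fun x : F => x ^ 2) (2 * k + 1) d
      = (Fintype.card F : ℤ) ^ (2 * k)
        + (Fintype.card F : ℤ) ^ k * (cnt (fun x : F => x ^ 2 = d) - 1) := by
  classical
  have hQ : (Fintype.card F : ℤ) ≠ 0 := by exact_mod_cast Fintype.card_ne_zero
  apply mul_left_cancel₀ hQ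
  rw [rep_succ, Finset.mul_sum, Finset.sum_congr rfl fun x _ => rep_sq_even h2 j hj k (d - x ^ 2),
      Finset.sum_add_distrib, ← Finset.mul_sum, Finset.sum_sub_distrib, ← Finset.mul_sum]
  have : ∑ x : F, (if d - x ^ 2 = 0 then (1 : ℤ) else 0) = cnt (fun x : F => x ^ 2 = d) := by
    unfold cnt
    refine Finset.sum_congr rfl fun x _ => ?_
    by_cases h' : x ^ 2 = d
    · simp [h']
    · rw [if_neg h', if_neg (fun h0 => h' (sub_eq_zero.1 h0).symm)]
  rw [this]
  simp
  ring

theorem cnt_sq_zero {F : Type*} [Field F] [Fintype F] : cnt (fun x : F => x ^ 2 = 0) = 1 := by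
  rw [← cnt_eq (0 : F)]
  exact cnt_congr fun x => by simp

theorem cnt_sq {F : Type*} [Field F] [Fintype F] (h2 : (2 : F) ≠ 0) (d : F) (hd : d ≠ 0) :
    cnt (fun x : F => x ^ 2 = d) = 0 ∨ cnt (fun x : F => x ^ 2 = d) = 2 := by
  classical
  by_cases h : ∃ y : F, y ^ 2 = d
  · right
    obtain ⟨y, hy⟩ := h
    have hy0 : y ≠ 0 := by rintro rfl; apply hd; rw [← hy]; simp
    rw [cnt_split _ (fun x => x = y)]
    have e1 : cnt (fun x : F => x ^ 2 = d ∧ x = y) = 1 := by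
      rw [← cnt_eq y]
      exact cnt_congr fun x => ⟨fun h => h.2, fun h => ⟨by rw [h, hy], h⟩⟩
    have e2 : cnt (fun x : F => x ^ 2 = d ∧ ¬ x = y) = 1 := by
      rw [← cnt_eq (-y)]
      refine cnt_congr fun x => ⟨fun h => ?_, fun h => ⟨by rw [h, neg_sq, hy], ?_⟩⟩
      · have := h.1
        rw [← hy, sq_eq_sq_iff_eq_or_eq_neg] at this
        exact this.resolve_left h.2
      · intro h'
        rw [h'] at h
        have : 2 * y = 0 := by linear_combination h
        simp [h2, hy0] at this
    rw [e1, e2]; norm_num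
  · left
    rw [← cnt_false (X := F)]
    exact cnt_congr fun x => ⟨fun h' => h ⟨x, h'⟩, fun h => h.elim⟩

/-- number of solutions of a linear equation -/
theorem cnt_lin {F : Type*} [Field F] [Fintype F] {m : ℕ} (b : Fin m → F) (hb : b ≠ 0) (d : F) :
    (Fintype.card F : ℤ) * cnt (fun x : Fin m → F => ∑ i, b i * x i = d)
      = (Fintype.card F : ℤ) ^ m := by
  classical
  obtain ⟨i, hi⟩ : ∃ i, b i ≠ 0 := by
    by_contra h; push Not at h; exact hb (funext h)
  have hs : ∀ d' : F, cnt (fun x : Fin m → F => ∑ i, b i * x i = d')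
      = cnt (fun x : Fin m → F => ∑ i, b i * x i = d) := by
    intro d'
    rw [← cnt_equiv (Equiv.addRight (Pi.single i ((d' - d) / b i) : Fin m → F))]
    refine cnt_congr fun x => ?_
    simp only [Equiv.coe_addRight, Pi.add_apply, mul_add, Finset.sum_add_distrib]
    rw [Finset.sum_eq_single (f := fun x => b x * (Pi.single i ((d' - d) / b i) : Fin m → F) x) i]
    · rw [Pi.single_eq_same, mul_div_cancel₀ _ hi]
      constructor <;> intro h <;> linear_combination h
    · intro j _ hj; simp [hj]
    · simp
  have := sum_fiber (fun x : Fin m → F => ∑ i, b i * x i)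
  rw [Finset.sum_congr rfl fun d' _ => hs d'] at this
  simpa using this

/-- hyperplane sections of the quadric `∑ x_i² = 0` -/
theorem cnt_quadric_hyperplane {F : Type*} [Field F] [Fintype F] (h2 : (2 : F) ≠ 0)
    (j : F) (hj : j * j = -1) (k : ℕ) (b : Fin (2 * k + 1) → F) (hb : b ≠ 0) :
    ∃ ε : ℤ, (ε = 0 ∨ ε = 1 ∨ ε = -1) ∧
    (Fintype.card F : ℤ) * cnt (fun x : Fin (2 * k + 1) → F => ∑ i, x i ^ 2 = 0 ∧ ∑ i, b i * x i = 0)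
      = (Fintype.card F : ℤ) ^ (2 * k) + ε * (Fintype.card F - 1) * (Fintype.card F : ℤ) ^ k := by
  classical
  set Q : ℤ := (Fintype.card F : ℤ) with hQdef
  set S : (Fin (2 * k + 1) → F) → F := fun x => ∑ i, x i ^ 2 with hS
  set L : (Fin (2 * k + 1) → F) → F := fun x => ∑ i, b i * x i with hL
  set R := cnt (fun x : Fin (2 * k + 1) → F => S x = 0 ∧ L x = 0) with hR
  have hC0 : cnt (fun x => S x = 0) = Q ^ (2 * k) := by
    have := rep_sq_odd h2 j hj k 0
    rw [cnt_sq_zero, sub_self, mul_zero, add_zero] at this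
    exact this
  have hL0 : Q * cnt (fun x => L x = 0) = Q ^ (2 * k + 1) := cnt_lin b hb 0
  -- first evaluation
  have hT1 : cnt (fun p : (Fin (2 * k + 1) → F) × F => S p.1 + p.2 * L p.1 = 0)
      = Q * R + Q ^ (2 * k + 1) - cnt (fun x => L x = 0) := by
    rw [cnt_prod]
    have : ∀ x, cnt (fun t => S x + t * L x = 0) =
        Q * (if S x = 0 ∧ L x = 0 then 1 else 0) + 1 - (if L x = 0 then 1 else 0) := by
      intro x
      by_cases hl : L x = 0
      · by_cases hs : S x = 0
        · simp [hl, hs, cnt_true, hQdef]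
        · simp [hl, hs, cnt_false]
      · simp only [hl, and_false, if_false, mul_zero, zero_add, sub_zero]
        rw [← cnt_eq (-S x / L x)]
        refine cnt_congr fun t => ?_
        rw [eq_div_iff hl]
        constructor <;> intro h <;> linear_combination h
    simp only [this]
    rw [Finset.sum_sub_distrib, Finset.sum_add_distrib, ← Finset.mul_sum]
    have c1 : ∑ x, (if S x = 0 ∧ L x = 0 then (1 : ℤ) else 0) = R := by
      rw [hR]; unfold cnt; exact Finset.sum_congr rfl fun x _ => by congr
    have c2 : ∑ x, (if L x = 0 then (1 : ℤ) else 0) = cnt (fun x => L x = 0) := by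
      unfold cnt; exact Finset.sum_congr rfl fun x _ => by congr
    rw [c1, c2]
    simp [hQdef]
  have hT2 : cnt (fun p : (Fin (2 * k + 1) → F) × F => S p.1 + p.2 * L p.1 = 0)
      = ∑ t : F, cnt (fun x => S x = (t / 2) ^ 2 * S b) := by
    rw [cnt_prod']
    refine Finset.sum_congr rfl fun t _ => ?_
    rw [← cnt_equiv (Equiv.addRight ((t / 2) • b)) (fun x => S x = (t / 2) ^ 2 * S b)]
    refine cnt_congr fun x => ?_
    have : S (Equiv.addRight ((t / 2) • b) x) = S x + t * L x + (t / 2) ^ 2 * S b := by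
      simp only [hS, hL, Equiv.coe_addRight, Pi.add_apply, Pi.smul_apply, smul_eq_mul,
        Finset.mul_sum, ← Finset.sum_add_distrib]
      refine Finset.sum_congr rfl fun i _ => ?_
      field_simp; ring
    simp only [this]
    constructor <;> intro h <;> linear_combination h
  have hQ0 : Q ≠ 0 := by rw [hQdef]; exact_mod_cast Fintype.card_ne_zero
  have hL1 : cnt (fun x => L x = 0) = Q ^ (2 * k) := by
    apply mul_left_cancel₀ hQ0; rw [hL0]; ring
  by_cases hSb : S b = 0
  · refine ⟨0, Or.inl rfl, ?_⟩
    have hT3 : cnt (fun p : (Fin (2 * k + 1) → F) × F => S p.1 + p.2 * L p.1 = 0)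
      = Q ^ (2 * k + 1) := by
      rw [hT2]; simp only [hSb, mul_zero, hC0]; simp [hQdef]; ring
    rw [hT1, hL1] at hT3
    linear_combination hT3
  · have hsc : ∀ t : F, t ≠ 0 → cnt (fun x => S x = (t / 2) ^ 2 * S b) = cnt (fun x => S x = S b) := by
      intro t ht
      have ht2 : t / 2 ≠ 0 := div_ne_zero ht h2
      rw [← cnt_equiv (Equiv.piCongrRight (fun _ : Fin (2 * k + 1) => Equiv.mulLeft₀ (t / 2) ht2))
        (fun x => S x = (t / 2) ^ 2 * S b)]
      refine cnt_congr fun x => ?_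
      have : S ((Equiv.piCongrRight (fun _ : Fin (2 * k + 1) => Equiv.mulLeft₀ (t / 2) ht2)) x)
          = (t / 2) ^ 2 * S x := by
        simp only [hS, Finset.mul_sum]
        refine Finset.sum_congr rfl fun i _ => ?_
        simp [mul_pow]
      simp only [this]
      exact mul_right_inj' (pow_ne_zero 2 ht2)
    have hT3 : ∑ t : F, cnt (fun x => S x = (t / 2) ^ 2 * S b)
        = Q ^ (2 * k) + (Q - 1) * cnt (fun x => S x = S b) := by
      rw [← Finset.add_sum_erase _ _ (Finset.mem_univ (0 : F)),
        Finset.sum_congr rfl fun t ht => hsc t (Finset.ne_of_mem_erase ht)]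
      simp [hC0, Finset.card_erase_of_mem]
      left
      rw [Nat.cast_sub Fintype.card_pos]; simp [hQdef]
    have hCb : cnt (fun x => S x = S b) = Q ^ (2 * k) + Q ^ k * (cnt (fun x : F => x ^ 2 = S b) - 1) :=
      rep_sq_odd h2 j hj k (S b)
    rw [hT1, hL1, ] at hT2
    rw [hT3, hCb] at hT2
    refine ⟨cnt (fun x : F => x ^ 2 = S b) - 1, ?_, ?_⟩
    · rcases cnt_sq h2 (S b) hSb with h | h <;> rw [h] <;> norm_num
    · linear_combination hT2
/-- the one-variable form -/
def hform {F : Type*} [Field F] (φ : F →+* F) (α γ x : F) : F :=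
  φ α * φ x ^ 2 - α * x ^ 2 - γ * (φ x * x)

theorem hform_mem {F : Type*} [Field F] (φ : F →+* F) (hφ2 : ∀ x, φ (φ x) = x)
    (α γ : F) (hγ : φ γ = -γ) (x : F) : φ (hform φ α γ x) = -hform φ α γ x := by
  simp only [hform, map_sub, map_mul, map_pow, hφ2, hγ]
  ring

theorem cnt_hform {F : Type*} [Field F] [Fintype F] [DecidableEq F] (q : ℕ) (hq : 2 ≤ q)
    (hF : Fintype.card F = q ^ 2) (h2 : (2 : F) ≠ 0)
    (φ : F →+* F) (hφ : ∀ x, φ x = x ^ q) (hφ2 : ∀ x, φ (φ x) = x)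
    (α γ s : F) (hα : α ≠ 0) (hγ : φ γ = -γ) (hs : s * s = 4 * (α * φ α) + γ ^ 2)
    (hs' : φ s = -s) (hs0 : s ≠ 0) (d : F) (hd : φ d = -d) :
    (q : ℤ) * cnt (fun x => hform φ α γ x = d)
      = (q : ℤ) ^ 2 + (-q) * (q * (if d = 0 then 1 else 0) - 1) := by
  have hα' : φ α ≠ 0 := by simpa using hα
  have hφ2' : φ 2 = 2 := map_ofNat φ 2
  have h4 : (4 : F) ≠ 0 := by
    have : (4 : F) = 2 * 2 := by norm_num
    rw [this]; exact mul_ne_zero h2 h2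
  have hp : (γ + s) * (s - γ) = 4 * (α * φ α) := by linear_combination hs
  have hne : (γ + s) * (s - γ) ≠ 0 := by
    rw [hp]; exact mul_ne_zero h4 (mul_ne_zero hα hα')
  have hgs : γ + s ≠ 0 := left_ne_zero_of_mul hne
  have hgs' : s - γ ≠ 0 := right_ne_zero_of_mul hne
  set u : F := (γ + s) / (2 * φ α) with hu
  have hu0 : u ≠ 0 := div_ne_zero hgs (mul_ne_zero h2 hα')
  have hφu : φ u = -(γ + s) / (2 * α) := by
    rw [hu]; simp only [map_div₀, map_add, map_mul, hφ2, hγ, hs', hφ2']; congr 1; ring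
  have hφu0 : φ u ≠ 0 := by simpa using hu0
  set κ : F := - φ α / φ u with hκ
  have hκ0 : κ ≠ 0 := div_ne_zero (neg_ne_zero.2 hα') hφu0
  have hfac : ∀ x, hform φ α γ x = κ * (φ (φ x - u * x) * (φ x - u * x)) := by
    intro x
    have e1 : φ u * κ = - φ α := by rw [hκ]; field_simp
    have e2 : κ * (γ + s) = 2 * α * φ α := by
      have : κ = 2 * α * φ α / (γ + s) := by rw [hκ, hφu]; field_simp
      rw [this]; field_simp
    have e2' : 2 * κ = φ α * (s - γ) / φ α := by
      field_simp
      apply mul_right_cancel₀ hgs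
      linear_combination 2 * e2 - hp
    have e3 : 2 * (κ * u) = 2 * α := by
      rw [hu]; field_simp; linear_combination e2
    have e3' : κ * u = α := mul_left_cancel₀ h2 e3
    have e4 : κ - φ α * u = -γ := by
      have e5 : 2 * κ = s - γ := by rw [e2']; field_simp
      have e6 : 2 * (φ α * u) = γ + s := by rw [hu]; field_simp
      apply mul_left_cancel₀ h2
      linear_combination e5 - e6
    simp only [hform, map_sub, map_mul, hφ2]
    linear_combination (φ x ^ 2 - u * (φ x * x)) * e1 + x ^ 2 * e3' - (φ x * x) * e4
  have hnorm : φ u * u ≠ 1 := by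
    intro h
    rw [hφu, hu] at h
    field_simp at h
    have : 2 * s * (γ + s) = 0 := by linear_combination hp - h
    simp [h2, hs0, hgs] at this
  have hinj : Function.Injective (fun x => φ x - u * x) := by
    intro x y hxy
    simp only at hxy
    set w := x - y with hw
    have h1 : φ w = u * w := by rw [hw, map_sub]; linear_combination hxy
    have h3 : w = φ u * φ w := by
      have := congrArg φ h1
      rwa [hφ2, map_mul] at this
    have h5 : w * (φ u * u - 1) = 0 := by rw [h1] at h3; linear_combination -h3
    rcases mul_eq_zero.1 h5 with h6 | h6
    · exact sub_eq_zero.1 h6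
    · exact absurd (sub_eq_zero.1 h6) hnorm
  have hbij : Function.Bijective (fun x => φ x - u * x) := Finite.injective_iff_bijective.1 hinj
  have hc : cnt (fun x => hform φ α γ x = d) = cnt (fun z => φ z * z = d / κ) := by
    rw [← cnt_equiv (Equiv.ofBijective _ hbij) (fun z => φ z * z = d / κ)]
    refine cnt_congr fun x => ?_
    rw [hfac, eq_div_iff hκ0, mul_comm]
    rfl
  rw [hc]
  by_cases hd0 : d = 0
  · rw [if_pos hd0, hd0, zero_div]
    have : cnt (fun z => φ z * z = 0) = 1 := by
      rw [← cnt_eq (0 : F)]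
      exact cnt_congr fun z => by simp
    rw [this]; ring
  · rw [if_neg hd0]
    have hκφ : φ κ = -κ := by
      have := hfac 1
      have h7 := hform_mem φ hφ2 α γ hγ 1
      rw [this] at h7
      simp only [map_mul, hφ2] at h7
      have h8 : φ 1 - u * 1 ≠ 0 := by
        intro h0
        have : (1 : F) = 0 := hinj (by simpa using h0)
        simp at this
      have h9 : φ (φ 1 - u * 1) ≠ 0 := (map_ne_zero φ).2 h8
      simp only [map_sub, map_mul, hφ2] at h9 h7
      apply mul_right_cancel₀ (mul_ne_zero h8 h9)
      linear_combination h7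
    rw [fiber_norm q hq hF φ hφ hφ2 (d / κ) (by rw [map_div₀, hd, hκφ, neg_div_neg_eq])
      (div_ne_zero hd0 hκ0)]
    ring
theorem hform_complete {F : Type*} [Field F] (φ : F →+* F) (hφ2 : ∀ x, φ (φ x) = x)
    (α γ s : F) (hγ : φ γ = -γ) (hs : s * s = 4 * (α * φ α) + γ ^ 2)
    (hs' : φ s = -s) (hs0 : s ≠ 0) (e : F) :
    ∃ y, ∀ x, hform φ α γ x + (φ e * φ x - e * x) = hform φ α γ (x + y) - hform φ α γ y := by
  have hφ2' : φ 2 = 2 := map_ofNat φ 2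
  have hy : ∃ y, 2 * α * y + γ * φ y = e := by
    refine ⟨(2 * φ α * e - γ * φ e) / (s * s), ?_⟩
    have hφy : φ ((2 * φ α * e - γ * φ e) / (s * s)) = (2 * α * φ e + γ * e) / (s * s) := by
      simp only [map_div₀, map_sub, map_mul, hφ2, hγ, hs', hφ2']
      congr 1 <;> ring
    rw [hφy]
    field_simp
    linear_combination (-e) * hs
  obtain ⟨y, hy⟩ := hy
  have hy' : 2 * φ α * φ y - γ * y = φ e := by
    rw [← hy]; simp only [map_add, map_mul, hφ2, hγ, hφ2']; ring
  refine ⟨y, fun x => ?_⟩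
  simp only [hform, map_add]
  linear_combination (-φ x) * hy' + x * hy

theorem cnt_aff_transversal {F : Type*} [Field F] [Fintype F] (q : ℕ) (hq : 2 ≤ q)
    (hF : Fintype.card F = q ^ 2) (h2 : (2 : F) ≠ 0)
    (φ : F →+* F) (hφ : ∀ x, φ x = x ^ q) (hφ2 : ∀ x, φ (φ x) = x)
    (α γ s : F) (hα : α ≠ 0) (hγ : φ γ = -γ) (hs : s * s = 4 * (α * φ α) + γ ^ 2)
    (hs' : φ s = -s) (hs0 : s ≠ 0) (m : ℕ) (a : F) (b : Fin m → F) (c : F) (hc : c ≠ 0) :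
    ∃ δ : ℤ, (δ = 0 ∨ δ = 1) ∧
    (q : ℤ) * cnt (fun p : (Fin m → F) × F => φ p.2 - p.2 + ∑ i, hform φ α γ (p.1 i) = 0 ∧
      a + ∑ i, b i * p.1 i + c * p.2 = 0) = (q : ℤ) ^ (2 * m) + (-q) ^ m * (q * δ - 1) := by
  classical
  choose y hy using fun i => hform_complete φ hφ2 α γ s hγ hs hs' hs0 (- b i / c)
  set V : AddSubgroup F :=
    { carrier := {v | φ v = -v}
      add_mem' := by intro u v hu hv; simp only [Set.mem_ofPred_eq] at *; rw [map_add, hu, hv]; ring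
      zero_mem' := by simp
      neg_mem' := by intro u hu; simp only [Set.mem_ofPred_eq] at *; rw [map_neg, hu] } with hVdef
  have hV : ∀ v, v ∈ V ↔ φ v = -v := fun v => Iff.rfl
  set d : F := ∑ i, hform φ α γ (y i) - (φ (-a / c) - (-a / c)) with hd
  have hdV : d ∈ V := by
    refine V.sub_mem (V.sum_mem fun i _ => hform_mem φ hφ2 α γ hγ _) ?_
    rw [hV, map_sub, hφ2]; ring
  have key := rep_formula V (hform φ α γ) (hform_mem φ hφ2 α γ hγ) (q : ℤ) (-q)
    (fun d hd => by
      rw [cnt_hform q hq hF h2 φ hφ hφ2 α γ s hα hγ hs hs' hs0 d hd, hF]; push_cast; ring) m d hdV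
  refine ⟨if d = 0 then 1 else 0, by split_ifs <;> simp, ?_⟩
  have hc1 : cnt (fun p : (Fin m → F) × F => φ p.2 - p.2 + ∑ i, hform φ α γ (p.1 i) = 0 ∧
      a + ∑ i, b i * p.1 i + c * p.2 = 0) = rep (hform φ α γ) m d := by
    rw [cnt_prod]
    unfold rep
    rw [← cnt_equiv (Equiv.addRight y)]
    conv_rhs => unfold cnt
    refine Finset.sum_congr rfl fun x _ => ?_
    set z : F := -a / c + ∑ i, (- b i / c) * x i with hz
    have hsum : ∑ i, hform φ α γ (Equiv.addRight y x i) =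
        ∑ i, hform φ α γ (x i) + (φ z - z) - (φ (-a / c) - (-a / c)) + ∑ i, hform φ α γ (y i) := by
      rw [hz, map_add, map_sum]
      have : ∑ i, hform φ α γ (Equiv.addRight y x i) =
        ∑ i, hform φ α γ (x i) + (∑ i, φ (- b i / c * x i) - ∑ i, (- b i / c) * x i) + ∑ i, hform φ α γ (y i) := by
        rw [← Finset.sum_sub_distrib, ← Finset.sum_add_distrib, ← Finset.sum_add_distrib]
        refine Finset.sum_congr rfl fun i _ => ?_
        rw [map_mul]
        simp only [Equiv.coe_addRight, Pi.add_apply]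
        linear_combination - hy i (x i)
      rw [this]; ring
    have hiff : ∀ w, (φ w - w + ∑ i, hform φ α γ (x i) = 0 ∧ a + ∑ i, b i * x i + c * w = 0) ↔
       (∑ i, hform φ α γ (Equiv.addRight y x i) = d) ∧ w = z := by
      intro w
      have hw : a + ∑ i, b i * x i + c * w = 0 ↔ w = z := by
        have : c * z = - a - ∑ i, b i * x i := by
          rw [hz, mul_add, Finset.mul_sum, mul_div_cancel₀ _ hc, sub_eq_add_neg, ← Finset.sum_neg_distrib]
          congr 1
          refine Finset.sum_congr rfl fun i _ => ?_
          field_simp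
        constructor
        · intro h
          apply mul_left_cancel₀ hc
          rw [this]; linear_combination h
        · rintro rfl; rw [this]; ring
      rw [hw]
      refine and_congr_left ?_
      rintro rfl
      rw [hsum, hd]
      constructor <;> intro h <;> linear_combination h
    rw [cnt_congr hiff, cnt_const_and, cnt_eq]
  rw [hc1, key, hF]
  push_cast
  ring

theorem cnt_aff_flat {F : Type*} [Field F] [Fintype F] (q : ℕ) (hq : 2 ≤ q)
    (hF : Fintype.card F = q ^ 2)
    (φ : F →+* F) (hφ : ∀ x, φ x = x ^ q) (hφ2 : ∀ x, φ (φ x) = x)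
    (α γ : F) (hγ : φ γ = -γ) (m : ℕ) (P : (Fin m → F) → Prop) :
    cnt (fun p : (Fin m → F) × F => φ p.2 - p.2 + ∑ i, hform φ α γ (p.1 i) = 0 ∧ P p.1)
      = q * cnt P := by
  classical
  rw [cnt_prod]
  conv_rhs => unfold cnt
  rw [Finset.mul_sum]
  refine Finset.sum_congr rfl fun x _ => ?_
  have : cnt (fun z => φ z - z + ∑ i, hform φ α γ (x i) = 0 ∧ P x) =
      cnt (fun z => P x ∧ φ z - z = -∑ i, hform φ α γ (x i)) :=
    cnt_congr fun z => by rw [and_comm, add_eq_zero_iff_eq_neg]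
  rw [this, cnt_const_and, fiber_trace q hq hF φ hφ hφ2]
  · simp
  · rw [map_neg, map_sum, Finset.sum_congr rfl fun i _ => hform_mem φ hφ2 α γ hγ (x i)]
    simp

theorem proj_card {F : Type*} [Field F] [Fintype F] {n : ℕ} (p : (Fin n → F) → Prop)
    (hp : ∀ (c : F) v, c ≠ 0 → (p (c • v) ↔ p v)) :
    (Nat.card ↥{P : Projectivization F (Fin n → F) | p P.rep} : ℤ) * (Fintype.card F - 1)
      = cnt (fun v : Fin n → F => v ≠ 0 ∧ p v) := by
  classical
  rw [cnt_card]
  have e : ↥{P : Projectivization F (Fin n → F) | p P.rep} × Fˣ ≃ {v : Fin n → F // v ≠ 0 ∧ p v} := by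
    refine Equiv.ofBijective (fun t => ⟨(t.2 : F) • t.1.1.rep,
      smul_ne_zero t.2.ne_zero t.1.1.rep_nonzero, (hp _ _ t.2.ne_zero).2 t.1.2⟩) ⟨?_, ?_⟩
    · rintro ⟨⟨P, hP⟩, c⟩ ⟨⟨P', hP'⟩, c'⟩ h
      simp only [Subtype.mk.injEq] at h
      have hPP : P = P' := by
        rw [← P.mk_rep, ← P'.mk_rep, Projectivization.mk_eq_mk_iff]
        refine ⟨c⁻¹ * c', ?_⟩
        rw [mul_smul, Units.smul_def c', ← h, ← Units.smul_def, inv_smul_smul]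
      subst hPP
      have := smul_left_injective F P.rep_nonzero h
      simp [Units.ext_iff, this]
    · rintro ⟨v, hv0, hv⟩
      obtain ⟨a, ha⟩ := Projectivization.exists_smul_eq_mk_rep F v hv0
      have hav : p (Projectivization.mk F v hv0).rep := by
        rw [← ha, Units.smul_def]; exact (hp _ _ a.ne_zero).2 hv
      refine ⟨(⟨Projectivization.mk F v hv0, hav⟩, a⁻¹), ?_⟩
      simp only [Subtype.mk.injEq]
      rw [← ha, ← Units.smul_def, inv_smul_smul]
  rw [← Nat.card_congr e, Nat.card_prod, Nat.card_eq_fintype_card (α := Fˣ), Fintype.card_units]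
  push_cast
  rw [Nat.cast_sub Fintype.card_pos]
  simp

theorem sum_mid {F : Type*} [Field F] (m : ℕ) (t z : F) (x : Fin m → F) (g : F → F) :
    (∑ i : Fin (m + 1 + 1), if 1 ≤ i.1 ∧ i.1 < m + 1 then
      g ((Fin.cons t (Fin.snoc x z : Fin (m + 1) → F) : Fin (m + 1 + 1) → F) i) else 0)
      = ∑ i, g (x i) := by
  rw [Fin.sum_univ_succ, Fin.sum_univ_castSucc]
  simp

theorem sum_mid' {F : Type*} [Field F] (m : ℕ) (g : Fin (m + 1 + 1) → F) :
    (∑ i : Fin (m + 1 + 1), if 1 ≤ i.1 ∧ i.1 < m + 1 then g i else 0)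
      = ∑ i : Fin m, g i.castSucc.succ := by
  rw [Fin.sum_univ_succ, Fin.sum_univ_castSucc]
  simp

theorem affEq_iff {F : Type*} [Field F] (q : ℕ) (φ : F →+* F) (hφ : ∀ x, φ x = x ^ q) (m : ℕ)
    (α β : F) (v : Fin (m + 1 + 1) → F) : affEq q (m + 1) α β v ↔
    φ (v (Fin.last (m + 1))) - v (Fin.last (m + 1))
      + ∑ i : Fin m, hform φ α (φ β - β) (v i.castSucc.succ) = 0 := by
  unfold affEq hform
  rw [sum_mid', sum_mid', sum_mid', Finset.sum_sub_distrib, Finset.sum_sub_distrib,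
    ← Finset.mul_sum, ← Finset.mul_sum, ← Finset.mul_sum]
  simp only [hφ, pow_mul', pow_succ, pow_zero, one_mul]
  constructor <;> intro h <;> linear_combination h

theorem master {F : Type*} [Field F] [Fintype F] (q : ℕ) (φ : F →+* F) (hφ : ∀ x, φ x = x ^ q)
    (m : ℕ) (α β : F) (f : Module.Dual F (Fin (m + 1 + 1) → F)) (a c : F) (b : Fin m → F)
    (hf : ∀ v, f v = a * v 0 + ∑ i : Fin m, b i * v i.castSucc.succ + c * v (Fin.last (m + 1))) :
    (Nat.card ↥(Bset F q (m + 1) α β ∩ {P | f P.rep = 0}) : ℤ) * (Fintype.card F - 1) + 1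
      = (Fintype.card F - 1) *
        cnt (fun p : (Fin m → F) × F => φ p.2 - p.2 + ∑ i, hform φ α (φ β - β) (p.1 i) = 0 ∧
          a + ∑ i, b i * p.1 i + c * p.2 = 0)
      + cnt (fun p : (Fin m → F) × F => ∑ i, p.1 i ^ 2 = 0 ∧ ∑ i, b i * p.1 i + c * p.2 = 0) := by
  classical
  set p : (Fin (m + 1 + 1) → F) → Prop := fun v =>
    ((v 0 ≠ 0 ∧ affEq q (m + 1) α β fun i => v i / v 0) ∨
       (v 0 = 0 ∧ (∑ i : Fin (m + 1 + 1), if 1 ≤ i.1 ∧ i.1 < m + 1 then v i ^ 2 else 0) = 0)) ∧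
      f v = 0 with hp
  have hscale : ∀ (c : F) v, c ≠ 0 → (p (c • v) ↔ p v) := by
    intro c v hc
    simp only [hp, Pi.smul_apply, smul_eq_mul, map_smul, sum_mid', mul_pow, ← Finset.mul_sum]
    simp [hc, mul_div_mul_left]
  have h1 := proj_card p hscale
  have hset : (Bset F q (m + 1) α β ∩ {P | f P.rep = 0})
      = {P : Projectivization F (Fin (m + 1 + 1) → F) | p P.rep} := rfl
  rw [hset, h1]
  let e : F × ((Fin m → F) × F) ≃ (Fin (m + 1 + 1) → F) :=
    { toFun := fun w => Fin.cons w.1 (Fin.snoc w.2.1 w.2.2 : Fin (m + 1) → F)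
      invFun := fun v => (v 0, (fun i => v i.castSucc.succ), v (Fin.last (m + 1)))
      left_inv := by
        rintro ⟨t, x, z⟩
        simp only [Fin.cons_zero, Fin.cons_succ, Fin.snoc_castSucc, Prod.mk.injEq, true_and]
        rw [← Fin.succ_last, Fin.cons_succ, Fin.snoc_last]
      right_inv := by
        intro v
        ext i
        refine Fin.cases ?_ (fun i => ?_) i
        · simp
        · refine Fin.lastCases ?_ (fun i => ?_) i
          · simp
          · simp }
  have e0 : ∀ t x z, e (t, x, z) 0 = t := fun t x z => by simp [e]
  have e1 : ∀ t x z i, e (t, x, z) (Fin.castSucc i).succ = x i := fun t x z i => by simp [e]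
  have e2 : ∀ t x z, e (t, x, z) (Fin.last (m + 1)) = z := fun t x z => by
    simp only [e, Equiv.coe_fn_mk]
    rw [← Fin.succ_last, Fin.cons_succ, Fin.snoc_last]
  rw [← cnt_equiv e, cnt_prod, ← Finset.add_sum_erase _ _ (Finset.mem_univ (0 : F))]
  have hpe : ∀ t x z, p (e (t, x, z)) ↔ ((t ≠ 0 ∧ φ (z / t) - z / t + ∑ i, hform φ α (φ β - β) (x i / t) = 0)
      ∨ (t = 0 ∧ ∑ i, x i ^ 2 = 0)) ∧ a * t + ∑ i, b i * x i + c * z = 0 := by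
    intro t x z
    simp only [hp, sum_mid', affEq_iff q φ hφ, hf, e0, e1, e2]
  have he0 : ∀ t x z, e (t, x, z) = 0 ↔ t = 0 ∧ (x, z) = 0 := by
    intro t x z
    have : (0 : Fin (m + 1 + 1) → F) = e (0, 0, 0) := by
      apply e.symm.injective; rw [Equiv.symm_apply_apply]; rfl
    rw [this, e.injective.eq_iff, Prod.mk.injEq]
    rfl
  have hz : cnt (fun y : (Fin m → F) × F => e (0, y) ≠ 0 ∧ p (e (0, y))) + 1
      = cnt (fun p : (Fin m → F) × F => ∑ i, p.1 i ^ 2 = 0 ∧ ∑ i, b i * p.1 i + c * p.2 = 0) := by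
    rw [cnt_split (fun p : (Fin m → F) × F => ∑ i, p.1 i ^ 2 = 0 ∧ ∑ i, b i * p.1 i + c * p.2 = 0)
      (fun y => y = 0), add_comm]
    congr 1
    · rw [← cnt_eq (0 : (Fin m → F) × F)]
      refine cnt_congr fun y => ⟨fun h => ⟨?_, h⟩, fun h => h.2⟩
      rw [h]; simp
    · refine cnt_congr ?_
      rintro ⟨x, z⟩
      rw [hpe, Ne, he0]
      simp
      tauto
  have hnz : ∀ t ∈ (Finset.univ : Finset F).erase 0,
      cnt (fun y : (Fin m → F) × F => e (t, y) ≠ 0 ∧ p (e (t, y)))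
      = cnt (fun p : (Fin m → F) × F => φ p.2 - p.2 + ∑ i, hform φ α (φ β - β) (p.1 i) = 0 ∧
          a + ∑ i, b i * p.1 i + c * p.2 = 0) := by
    intro t ht
    have ht0 : t ≠ 0 := Finset.ne_of_mem_erase ht
    rw [← cnt_equiv (Equiv.prodCongr (Equiv.piCongrRight fun _ : Fin m => Equiv.mulLeft₀ t ht0)
      (Equiv.mulLeft₀ t ht0)) (fun y : (Fin m → F) × F => e (t, y) ≠ 0 ∧ p (e (t, y)))]
    refine cnt_congr ?_
    rintro ⟨x, z⟩
    simp only [Equiv.prodCongr_apply, Prod.map, Equiv.mulLeft₀_apply]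
    rw [hpe, Ne, he0]
    simp only [Equiv.piCongrRight_apply, Pi.map_apply, Equiv.mulLeft₀_apply,
      mul_div_cancel_left₀ _ ht0]
    have : a * t + ∑ i, b i * (t * x i) + c * (t * z) = t * (a + ∑ i, b i * x i + c * z) := by
      rw [mul_add, mul_add, Finset.mul_sum]
      congr 1
      · congr 1
        · ring
        · exact Finset.sum_congr rfl fun i _ => by ring
      · ring
    rw [this]
    simp [ht0]
  rw [Finset.sum_congr rfl hnz, ← hz]
  simp [Finset.card_erase_of_mem]
  rw [Nat.cast_sub Fintype.card_pos]
  simp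
  ring
theorem exists_frob (q : ℕ) (hq : IsPrimePow q) (F : Type*) [Field F] [Fintype F]
    (hF : Fintype.card F = q ^ 2) : ∃ φ : F →+* F, (∀ x, φ x = x ^ q) ∧ ∀ x, φ (φ x) = x := by
  have hc := hF
  rw [isPrimePow_nat_iff] at hq
  obtain ⟨p, n, hp, hn, rfl⟩ := hq
  haveI : Fact p.Prime := ⟨hp⟩
  rw [← pow_mul] at hc
  haveI : CharP F p := charP_of_card_eq_prime_pow hc
  refine ⟨iterateFrobenius F p n, fun x => rfl, fun x => ?_⟩
  rw [iterateFrobenius_def, iterateFrobenius_def, ← pow_mul, ← sq, ← hF, FiniteField.pow_card]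

/-- size and hyperplane intersection numbers of `B` for `q` odd and
`r ≥ 4` even, with `4α^{q+1} + (β^q−β)²` a non-square of the subfield `GF(q)`
(the fixed field of `x ↦ x^q`). -/
theorem statement3 (q r : ℕ) (hq : IsPrimePow q) (hqodd : Odd q)
    (hr : 4 ≤ r) (hreven : Even r)
    (F : Type) [Field F] [Fintype F] (hF : Fintype.card F = q ^ 2)
    (α β : F) (hα : α ≠ 0) (hβ : β ^ q ≠ β)
    (hcond : ∀ t : F, t ^ q = t → t ^ 2 ≠ 4 * α ^ (q + 1) + (β ^ q - β) ^ 2) :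
    Nat.card ↥(Bset F q r α β) =
        q ^ (2 * r - 1) + (q ^ (2 * (r - 1)) - q ^ 2) / (q ^ 2 - 1) + 1 ∧
    ∀ f : Module.Dual F (Fin (r + 1) → F), f ≠ 0 →
      Nat.card ↥(Bset F q r α β ∩ {P | f P.rep = 0}) ∈
        ({q ^ 2 * ((q ^ (2 * (r - 2)) - 1) / (q ^ 2 - 1)) + 1,
          q ^ (2 * r - 3) - q ^ (r - 1) + q ^ (r - 2) + (q ^ (2 * (r - 2)) - 1) / (q ^ 2 - 1),
          q ^ (2 * r - 3) + (q ^ (2 * (r - 2)) - q ^ 2) / (q ^ 2 - 1) - q ^ (r - 2) + 1,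
          q ^ (2 * r - 3) + (q ^ (2 * (r - 2)) - q ^ 2) / (q ^ 2 - 1) + 1,
          q ^ (2 * r - 3) + (q ^ (2 * (r - 2)) - q ^ 2) / (q ^ 2 - 1) + q ^ (r - 2) + 1}
          : Set ℕ) := by
  have hq1 : 2 ≤ q := hq.two_le
  obtain ⟨φ, hφ, hφ2⟩ := exists_frob q hq F hF
  obtain ⟨k, hk, rfl⟩ : ∃ k, 1 ≤ k ∧ r = 2 * k + 1 + 1 := by
    obtain ⟨l, hl⟩ := hreven
    exact ⟨l - 1, by omega, by omega⟩
  have hchar : ringChar F ≠ 2 := by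
    intro h
    have := FiniteField.even_card_iff_char_two.1 h
    rw [hF] at this
    have h3 : Odd (q ^ 2) := hqodd.pow
    rw [Nat.odd_iff] at h3
    omega
  have h2 : (2 : F) ≠ 0 := Ring.two_ne_zero hchar
  obtain ⟨j, hj⟩ : ∃ j : F, j * j = -1 := by
    have : IsSquare (-1 : F) := by
      rw [FiniteField.isSquare_neg_one_iff, hF]
      obtain ⟨l, rfl⟩ := hqodd
      ring_nf
      omega
    obtain ⟨j, hj⟩ := this
    exact ⟨j, hj.symm⟩
  set γ : F := φ β - β with hγdef
  have hγ : φ γ = -γ := by rw [hγdef, map_sub, hφ2]; ring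
  have hcond' : ∀ t : F, φ t = t → t ^ 2 ≠ 4 * (α * φ α) + γ ^ 2 := by
    intro t ht
    have := hcond t (by rw [← hφ, ht])
    rw [pow_succ α, ← hφ, ← hφ, mul_comm (φ α)] at this
    exact this
  have hD0 : 4 * (α * φ α) + γ ^ 2 ≠ 0 := by
    have := hcond' 0 (map_zero φ)
    intro h
    rw [h] at this
    simp at this
  have hDφ : φ (4 * (α * φ α) + γ ^ 2) = 4 * (α * φ α) + γ ^ 2 := by
    have h4 : φ 4 = 4 := map_ofNat φ 4
    simp only [map_add, map_mul, map_pow, hφ2, hγ, h4]; ring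
  obtain ⟨s, hs⟩ : ∃ s : F, s * s = 4 * (α * φ α) + γ ^ 2 := by
    have : IsSquare (4 * (α * φ α) + γ ^ 2) := by
      rw [FiniteField.isSquare_iff hchar hD0, hF]
      set D := 4 * (α * φ α) + γ ^ 2
      obtain ⟨l, rfl⟩ := hqodd
      have hD1 : D ^ (2 * l) = 1 := by
        apply mul_right_cancel₀ hD0
        rw [← pow_succ, one_mul, ← hφ, hDφ]
      have : (2 * l + 1) ^ 2 / 2 = (2 * l) * (l + 1) := by
        have : (2 * l + 1) ^ 2 = 2 * ((2 * l) * (l + 1)) + 1 := by ring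
        omega
      rw [this, pow_mul, hD1, one_pow]
    obtain ⟨s, hs⟩ := this
    exact ⟨s, hs.symm⟩
  have hs0 : s ≠ 0 := by rintro rfl; apply hD0; rw [← hs]; simp
  have hs' : φ s = -s := by
    have h1 : φ s * φ s = s * s := by rw [← map_mul, hs, hDφ]
    rcases mul_self_eq_mul_self_iff.1 h1 with h | h
    · exact absurd (by rw [sq, hs]) (hcond' s h)
    · exact h
  -- arithmetic
  set G : ℕ := ∑ i ∈ Finset.range (2 * k), (q ^ 2) ^ i with hG
  have hQ2 : 2 ≤ q ^ 2 := by nlinarith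
  have hGm : G * (q ^ 2 - 1) + 1 = q ^ (4 * k) := by
    have := Nat.geomSum_eq hQ2 (2 * k)
    have h1 := geom_sum_mul_add (q ^ 2 - 1) (2 * k)
    rw [Nat.sub_add_cancel (by omega), ← pow_mul] at h1
    rw [hG, h1]; congr 1; ring
  have hG1 : 1 ≤ G := by
    by_contra h
    have : G = 0 := by omega
    rw [this] at hGm
    have h4 : 1 < q ^ (4 * k) := Nat.one_lt_pow (by omega) (by omega)
    omega
  have hQ1 : 0 < q ^ 2 - 1 := by omega
  have d1 : (q ^ (2 * (2 * k + 1 + 1 - 1)) - q ^ 2) / (q ^ 2 - 1) = q ^ 2 * G := by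
    apply Nat.div_eq_of_eq_mul_left hQ1
    have : q ^ (2 * (2 * k + 1 + 1 - 1)) = q ^ 2 * q ^ (4 * k) := by
      rw [← pow_add]; congr 1; omega
    rw [this, ← hGm, mul_add, mul_one, Nat.add_sub_cancel, mul_assoc]
  have d2 : (q ^ (2 * (2 * k + 1 + 1 - 2)) - 1) / (q ^ 2 - 1) = G := by
    apply Nat.div_eq_of_eq_mul_left hQ1
    have : q ^ (2 * (2 * k + 1 + 1 - 2)) = q ^ (4 * k) := by congr 1; omega
    rw [this, ← hGm, Nat.add_sub_cancel]
  have d3 : (q ^ (2 * (2 * k + 1 + 1 - 2)) - q ^ 2) / (q ^ 2 - 1) = G - 1 := by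
    apply Nat.div_eq_of_eq_mul_left hQ1
    have : q ^ (2 * (2 * k + 1 + 1 - 2)) = q ^ (4 * k) := by congr 1; omega
    rw [this, ← hGm, Nat.sub_mul]
    omega
  have x1 : 2 * (2 * k + 1 + 1) - 1 = 4 * k + 3 := by omega
  have x2 : 2 * (2 * k + 1 + 1) - 3 = 4 * k + 1 := by omega
  have x3 : 2 * k + 1 + 1 - 1 = 2 * k + 1 := by omega
  have x4 : 2 * k + 1 + 1 - 2 = 2 * k := by omega
  rw [d1, d2, d3, x1, x2, x3, x4]
  have hGz : (G : ℤ) * ((q : ℤ) ^ 2 - 1) + 1 = (q : ℤ) ^ (4 * k) := by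
    have := congrArg (Nat.cast (R := ℤ)) hGm
    push_cast [Nat.cast_sub (show 1 ≤ q ^ 2 by omega)] at this
    exact this
  have hQz : ((q : ℤ) ^ 2 - 1) ≠ 0 := by
    have : (2 : ℤ) ≤ (q : ℤ) ^ 2 := by exact_mod_cast hQ2
    omega
  have hqz : (q : ℤ) ≠ 0 := by
    have : q ≠ 0 := by omega
    exact_mod_cast this
  have hFz : (Fintype.card F : ℤ) = (q : ℤ) ^ 2 := by rw [hF]; push_cast; rfl
  have hS0 : cnt (fun x : Fin (2 * k + 1) → F => ∑ i, x i ^ 2 = 0) = (q : ℤ) ^ (4 * k) := by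
    have := rep_sq_odd h2 j hj k 0
    rw [cnt_sq_zero, sub_self, mul_zero, add_zero, hFz, ← pow_mul] at this
    rw [show 4 * k = 2 * (2 * k) by ring]
    exact this
  have hInfFree : ∀ P : (Fin (2 * k + 1) → F) → Prop,
      cnt (fun p : (Fin (2 * k + 1) → F) × F => P p.1) = (q : ℤ) ^ 2 * cnt P := by
    intro P
    have := cnt_and_prod P (fun _ : F => True)
    rw [cnt_true, hFz] at this
    rw [mul_comm ((q : ℤ) ^ 2) (cnt P), ← this]
    exact cnt_congr fun p => by simp
  constructor
  · have hm := master q φ hφ (2 * k + 1) α β 0 0 0 0 (by intro v; simp)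
    have hset : (Bset F q (2 * k + 1 + 1) α β ∩
        {P | (0 : Module.Dual F (Fin (2 * k + 1 + 1 + 1) → F)) P.rep = 0})
        = Bset F q (2 * k + 1 + 1) α β := by
      ext P; simp
    rw [hset] at hm
    have hA := cnt_aff_flat q hq1 hF φ hφ hφ2 α γ hγ (2 * k + 1) (fun _ => True)
    rw [cnt_true] at hA
    have hI := hInfFree (fun x => ∑ i, x i ^ 2 = 0)
    rw [hS0] at hI
    simp only [Pi.zero_apply, zero_mul, Finset.sum_const_zero, add_zero, and_true] at hm hA
    rw [hA, hI, hFz, Fintype.card_fun, hF, Fintype.card_fin] at hm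
    push_cast at hm
    have : (Nat.card ↥(Bset F q (2 * k + 1 + 1) α β) : ℤ)
        = (q : ℤ) ^ (4 * k + 3) + (q : ℤ) ^ 2 * G + 1 := by
      apply mul_right_cancel₀ hQz
      linear_combination hm - (q : ℤ) ^ 2 * hGz
    exact_mod_cast this
  · intro f hf0
    simp only [Set.mem_insert_iff, Set.mem_singleton_iff]
    set N := Nat.card ↥(Bset F q (2 * k + 1 + 1) α β ∩ {P | f P.rep = 0}) with hN
    set a : F := f (Pi.single 0 1) with ha
    set b : Fin (2 * k + 1) → F := fun i => f (Pi.single i.castSucc.succ 1) with hb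
    set c : F := f (Pi.single (Fin.last (2 * k + 1 + 1)) 1) with hc
    have hf : ∀ v, f v = a * v 0 + ∑ i : Fin (2 * k + 1), b i * v i.castSucc.succ
        + c * v (Fin.last (2 * k + 1 + 1)) := by
      intro v
      rw [LinearMap.pi_apply_eq_sum_univ f v, Fin.sum_univ_succ, Fin.sum_univ_castSucc]
      have hpi : ∀ i, (fun l => if i = l then (1 : F) else 0) = (Pi.single i 1 : Fin (2 * k + 1 + 1 + 1) → F) := by
        intro i; ext l; simp [Pi.single_apply, eq_comm]
      simp only [hpi, smul_eq_mul, Fin.succ_last, ha, hb, hc]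
      simp only [mul_comm, add_assoc]
    have hm := master q φ hφ (2 * k + 1) α β f a c b hf
    rw [← hN, hFz] at hm
    have hCA : q ^ (2 * k + 1) ≤ q ^ (4 * k + 1) := Nat.pow_le_pow_right (by omega) (by omega)
    have hCB : q ^ (2 * k) ≤ q ^ (2 * k + 1) := Nat.pow_le_pow_right (by omega) (by omega)
    by_cases hc0 : c = 0
    · simp only [hc0, zero_mul, add_zero] at hm
      have hA := cnt_aff_flat q hq1 hF φ hφ hφ2 α γ hγ (2 * k + 1) (fun x => a + ∑ i, b i * x i = 0)
      have hI := hInfFree (fun x => ∑ i, x i ^ 2 = 0 ∧ ∑ i, b i * x i = 0)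
      rw [hA, hI] at hm
      by_cases hb0 : b = 0
      · left
        have ha0 : a ≠ 0 := by
          intro ha0
          apply hf0
          ext v
          simp [hf, ha0, hb0, hc0]
        simp only [hb0, Pi.zero_apply, zero_mul, Finset.sum_const_zero, add_zero, and_true, ha0,
          cnt_false, hS0] at hm
        have : (N : ℤ) = (q : ℤ) ^ 2 * G + 1 := by
          apply mul_right_cancel₀ hQz
          linear_combination hm - (q : ℤ) ^ 2 * hGz
        exact_mod_cast this
      · have hL := cnt_lin b hb0 (-a)
        have hL' : cnt (fun x : Fin (2 * k + 1) → F => a + ∑ i, b i * x i = 0) = (q : ℤ) ^ (4 * k) := by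
          have : cnt (fun x : Fin (2 * k + 1) → F => a + ∑ i, b i * x i = 0)
              = cnt (fun x : Fin (2 * k + 1) → F => ∑ i, b i * x i = -a) :=
            cnt_congr fun x => by
              constructor <;> intro h <;> linear_combination h
          rw [this]
          rw [hFz] at hL
          apply mul_left_cancel₀ (pow_ne_zero 2 hqz)
          rw [hL]; ring
        obtain ⟨ε, hε, hR⟩ := cnt_quadric_hyperplane h2 j hj k b hb0
        rw [hFz] at hR
        rw [hR, hL'] at hm
        have hfin : (N : ℤ) = (q ^ (4 * k + 1) : ℕ) + G + ε * (q ^ (2 * k) : ℕ) := by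
          push_cast
          apply mul_right_cancel₀ hQz
          linear_combination hm - hGz
        rcases hε with rfl | rfl | rfl
        · right; right; right; left; omega
        · right; right; right; right; omega
        · right; right; left; omega
    · obtain ⟨δ, hδ, hA⟩ := cnt_aff_transversal q hq1 hF h2 φ hφ hφ2 α γ s hα hγ hs hs' hs0
        (2 * k + 1) a b c hc0
      have hI : cnt (fun p : (Fin (2 * k + 1) → F) × F =>
          ∑ i, p.1 i ^ 2 = 0 ∧ ∑ i, b i * p.1 i + c * p.2 = 0) = (q : ℤ) ^ (4 * k) := by
        classical
        rw [← hS0, cnt_prod]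
        conv_rhs => unfold cnt
        refine Finset.sum_congr rfl fun x _ => ?_
        simp only
        rw [cnt_const_and]
        have : cnt (fun z => ∑ i, b i * x i + c * z = 0) = 1 := by
          rw [← cnt_eq (-(∑ i, b i * x i) / c)]
          refine cnt_congr fun z => ?_
          rw [eq_div_iff hc0]
          constructor <;> intro h <;> linear_combination h
        rw [this]
      rw [hI] at hm
      have hA' : cnt (fun p : (Fin (2 * k + 1) → F) × F => φ p.2 - p.2 + ∑ i, hform φ α γ (p.1 i) = 0 ∧
          a + ∑ i, b i * p.1 i + c * p.2 = 0)
          = (q : ℤ) ^ (4 * k + 1) - (q : ℤ) ^ (2 * k) * (q * δ - 1) := by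
        apply mul_left_cancel₀ hqz
        rw [hA, Odd.neg_pow ⟨k, rfl⟩]; ring
      rw [hA'] at hm
      have hfin : (N : ℤ) = (q ^ (4 * k + 1) : ℕ) + G - δ * (q ^ (2 * k + 1) : ℕ) + (q ^ (2 * k) : ℕ) := by
        push_cast
        apply mul_right_cancel₀ hQz
        linear_combination hm - hGz
      rcases hδ with rfl | rfl
      · right; right; right; right; omega
      · right; left; omega
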